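/- arXiv:0808.1505 — 4 statements merged into one kernel-verified Lean document; each statement's English description precedes it below -/
import Mathlib

section
/- Let n and t be natural numbers with n > 3t, let Fa be a finset of Fin n with card Fa ≤ t, let V be a type, and let v, w : Fin n → V satisfy v k = w k for every k ∉ Fa. If A and B are finsets of Fin n with card A ≥ n - t and card B ≥ n - t, and r, r' ∈ V are such that v k = r for all k ∈ A and w k = r' for all k ∈ B, then r = r'. -/
/-- Correctness of Weak Reliable Broadcast: two nonfaulty processes that each accept a
value on the strength of a quorum of `n - t` identical messages accept the same value. -/
theorem wrb_correctness
    (n t : ℕ) (hn : n > 3 * t)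
    (Fa : Finset (Fin n)) (hFa : Fa.card ≤ t)
    (V : Type*) (v w : Fin n → V)
    (hvw : ∀ k, k ∉ Fa → v k = w k)
    (A B : Finset (Fin n))
    (hA : A.card ≥ n - t) (hB : B.card ≥ n - t)
    (r r' : V)
    (hr : ∀ k ∈ A, v k = r) (hr' : ∀ k ∈ B, w k = r') :
    r = r' := by
  have h1 := Finset.card_union_add_card_inter A B
  have h2 : (A ∪ B).card ≤ n := by
    simpa using Finset.card_le_univ (A ∪ B)
  have h3 : Fa.card < (A ∩ B).card := by omega
  obtain ⟨k, hk, hkF⟩ := Finset.exists_mem_notMem_of_card_lt_card h3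
  rw [Finset.mem_inter] at hk
  rw [← hr k hk.1, ← hr' k hk.2]
  exact hvw k hkF
end

section
/- Let F be a finite field, let t be a natural number with card F > t, let T be a finset of F with 0 ∉ T and card T ≤ t, let y : F → F, and let s ∈ F. Then the number of polynomials f over F of degree at most t satisfying f.eval 0 = s and f.eval x = y x for every x ∈ T is exactly (card F)^(t - card T). In particular, this number is independent of s. -/
/-- Hiding property of threshold secret sharing: for any secret `s`, the number of
degree-`t` polynomials `f` with `f 0 = s` that agree with the view `y` on a set `T` of
at most `t` nonzero points is exactly `(card F)^(t - card T)`, independently of `s`. -/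
theorem hiding_count_polynomials
    (F : Type*) [Field F] [Fintype F] (t : ℕ) (hFt : Fintype.card F > t)
    (T : Finset F) (hT0 : (0 : F) ∉ T) (hTt : T.card ≤ t)
    (y : F → F) (s : F) :
    Nat.card {f : Polynomial F //
        f.natDegree ≤ t ∧ f.eval 0 = s ∧ ∀ x ∈ T, f.eval x = y x}
      = Fintype.card F ^ (t - T.card) := by
  classical
  have hc : (insert 0 T).card = T.card + 1 := Finset.card_insert_of_notMem hT0
  obtain ⟨U, hSU, hU⟩ := Finset.exists_superset_card_eq (s := insert 0 T) (n := t + 1)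
    (by omega) (by omega)
  have hinj : Set.InjOn (id : F → F) (U : Set F) := Function.injective_id.injOn
  have hdeg : ∀ f : Polynomial F, f.natDegree ≤ t ↔ f.degree < (U.card : WithBot ℕ) := by
    intro f
    rw [hU, Polynomial.degree_lt_iff_coeff_zero, Polynomial.natDegree_le_iff_coeff_eq_zero]
    exact Iff.rfl
  have hcard : (U \ insert 0 T).card = t - T.card := by
    rw [Finset.card_sdiff_of_subset hSU]; omega
  let φ : {f : Polynomial F //
        f.natDegree ≤ t ∧ f.eval 0 = s ∧ ∀ x ∈ T, f.eval x = y x} →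
        ((U \ insert 0 T : Finset F) → F) := fun f x => f.1.eval x.1
  have hφ : Function.Bijective φ := by
    constructor
    · rintro ⟨f, hf, hf0, hfT⟩ ⟨g, hg, hg0, hgT⟩ h
      apply Subtype.ext
      refine Polynomial.eq_of_degrees_lt_of_eval_finset_eq U ((hdeg f).1 hf) ((hdeg g).1 hg) ?_
      intro x hx
      by_cases h0 : x = 0
      · subst h0; exact hf0.trans hg0.symm
      by_cases hxT : x ∈ T
      · exact (hfT x hxT).trans (hgT x hxT).symm
      · exact congrFun h ⟨x, by simp [hx, h0, hxT]⟩
    · intro r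
      let v : F → F := fun x => if x = 0 then s else if x ∈ T then y x else
        if h : x ∈ U \ insert 0 T then r ⟨x, h⟩ else 0
      have hev : ∀ x ∈ U, (Lagrange.interpolate U id v).eval x = v x := fun x hx =>
        Lagrange.eval_interpolate_at_node v hinj hx
      refine ⟨⟨Lagrange.interpolate U id v,
        (hdeg _).2 (Lagrange.degree_interpolate_lt v hinj), ?_, ?_⟩, ?_⟩
      · rw [hev 0 (hSU (by simp))]; simp [v]
      · intro x hx
        rw [hev x (hSU (by simp [hx]))]
        have : x ≠ 0 := fun h => hT0 (h ▸ hx)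
        simp [v, this, hx]
      · funext ⟨x, hx⟩
        have hx' := hx
        simp only [Finset.mem_sdiff, Finset.mem_insert, not_or] at hx'
        change (Lagrange.interpolate U id v).eval x = _
        rw [hev x hx'.1]
        simp only [v]
        rw [if_neg hx'.2.1, if_neg hx'.2.2, dif_pos hx]
  rw [Nat.card_congr (Equiv.ofBijective φ hφ), Nat.card_eq_fintype_card, Fintype.card_fun,
    Fintype.card_coe, hcard]
end

section
/- Let F be a field, let t be a natural number, let K be a finset of F with card K ≥ t + 1, and let g, h : F → Polynomial F be families such that for every k ∈ K the polynomials g k and h k have degree at most t, and (g k).eval ℓ = (h ℓ).eval k for all k, ℓ ∈ K. Then there exists a unique bivariate polynomial f over F of degree at most t in each variable such that for every k ∈ K, the univariate polynomial y ↦ f(k, y) equals g k and the univariate polynomial x ↦ f(x, k) equals h k. -/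
theorem eq_of_natDegree_le_of_eval_eq_aux {F : Type*} [Field F] (t : ℕ)
    (K : Finset F) (hK : t + 1 ≤ K.card) (p q : Polynomial F)
    (hp : p.natDegree ≤ t) (hq : q.natDegree ≤ t)
    (he : ∀ k ∈ K, p.eval k = q.eval k) : p = q := by
  have aux : ∀ r : Polynomial F, r.natDegree ≤ t → r.degree < (K.card : WithBot ℕ) := by
    intro r hr
    refine lt_of_le_of_lt (Polynomial.degree_le_of_natDegree_le hr) ?_
    exact_mod_cast hK
  exact Polynomial.eq_of_degrees_lt_of_eval_finset_eq K (aux p hp) (aux q hq) he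

/-- Pairwise-consistency lemma of SVSS: a family of at least `t + 1` pairwise-consistent
row polynomials `g k` and column polynomials `h k` (with `(g k).eval ℓ = (h ℓ).eval k`)
of degree at most `t` is induced by a unique bivariate polynomial of degree at most `t`
in each variable.  Here `f(k, ·)`, the row polynomial in `Y`, is obtained by evaluating
the `X`-coefficients of `f` at `k` (i.e., `f.map (Polynomial.evalRingHom k)`), and
`f(·, k)`, the column polynomial in `X`, is `f.eval (Polynomial.C k)`. -/
theorem bivariate_from_consistent_rows_cols
    (F : Type*) [Field F] (t : ℕ)
    (K : Finset F) (hK : K.card ≥ t + 1)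
    (g h : F → Polynomial F)
    (hdeg : ∀ k ∈ K, (g k).natDegree ≤ t ∧ (h k).natDegree ≤ t)
    (hcons : ∀ k ∈ K, ∀ ℓ ∈ K, (g k).eval ℓ = (h ℓ).eval k) :
    ∃! f : Polynomial (Polynomial F),
      (f.natDegree ≤ t ∧ ∀ i, (f.coeff i).natDegree ≤ t) ∧
      ∀ k ∈ K, f.map (Polynomial.evalRingHom k) = g k ∧
        f.eval (Polynomial.C k) = h k := by
  classical
  obtain ⟨S, hSK, hS⟩ := Finset.exists_subset_card_eq hK
  have hinj : Set.InjOn (id : F → F) (S : Set F) := Function.injective_id.injOn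
  let f : Polynomial (Polynomial F) :=
    ∑ k ∈ S, Polynomial.C (Lagrange.basis S id k) * (g k).map Polynomial.C
  have hf1 : f.natDegree ≤ t := by
    refine Polynomial.natDegree_sum_le_of_forall_le _ _ fun k hk => ?_
    exact (Polynomial.natDegree_C_mul_le _ _).trans
      (Polynomial.natDegree_map_le.trans (hdeg k (hSK hk)).1)
  have hf2 : ∀ i, (f.coeff i).natDegree ≤ t := by
    intro i
    simp only [f, Polynomial.finset_sum_coeff, Polynomial.coeff_C_mul, Polynomial.coeff_map]
    refine Polynomial.natDegree_sum_le_of_forall_le _ _ fun k hk => ?_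
    refine (Polynomial.natDegree_mul_C_le _ _).trans ?_
    rw [Lagrange.natDegree_basis hinj hk, hS]
    simp
  have hcol : ∀ l ∈ K, f.eval (Polynomial.C l) = h l := by
    intro l hl
    have hlt : (h l).degree < (S.card : WithBot ℕ) := by
      refine lt_of_le_of_lt (Polynomial.degree_le_of_natDegree_le (hdeg l hl).2) ?_
      rw [hS]
      exact_mod_cast Nat.lt_succ_self t
    rw [Lagrange.eq_interpolate hinj hlt, Lagrange.interpolate_apply]
    simp only [f, Polynomial.eval_finset_sum, Polynomial.eval_mul, Polynomial.eval_C]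
    refine Finset.sum_congr rfl fun k hk => ?_
    rw [Polynomial.eval_map, Polynomial.eval₂_at_apply, hcons k (hSK hk) l hl, mul_comm]
    rfl
  have hmap : ∀ (p : Polynomial (Polynomial F)) (k l : F),
      (p.map (Polynomial.evalRingHom k)).eval l = (p.eval (Polynomial.C l)).eval k := by
    intro p k l
    have := Polynomial.eval_map_apply (f := Polynomial.evalRingHom k) (p := p) (Polynomial.C l)
    simpa using this
  refine ⟨f, ⟨⟨hf1, hf2⟩, fun k hk => ⟨?_, hcol k hk⟩⟩, ?_⟩
  · refine eq_of_natDegree_le_of_eval_eq_aux t K hK _ _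
      (Polynomial.natDegree_map_le.trans hf1) (hdeg k hk).1 fun l hl => ?_
    rw [hmap, hcol l hl, hcons k hk l hl]
  · rintro f' ⟨⟨-, h2⟩, h3⟩
    ext1 i
    refine eq_of_natDegree_le_of_eval_eq_aux t K hK _ _ (h2 i) (hf2 i) fun k hk => ?_
    have e : f'.map (Polynomial.evalRingHom k) = f.map (Polynomial.evalRingHom k) := by
      rw [(h3 k hk).1]
      refine (eq_of_natDegree_le_of_eval_eq_aux t K hK _ _
        (Polynomial.natDegree_map_le.trans hf1) (hdeg k hk).1 fun l hl => ?_).symm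
      rw [hmap, hcol l hl, hcons k hk l hl]
    have := congrArg (fun p => Polynomial.coeff p i) e
    simpa [Polynomial.coeff_map] using this
end

section
/- Let F be a finite field, let t be a natural number, let T be a finset of F with 0 ∉ T and card T ≤ t, and let g, h : F → Polynomial F be families such that for every j ∈ T the polynomials g j and h j have degree at most t, and (g j).eval k = (h k).eval j for all j, k ∈ T. Then for any s, s' ∈ F, the number of bivariate polynomials f over F of degree at most t in each variable satisfying f(0, 0) = s, f(j, ·) = g j and f(·, j) = h j for every j ∈ T, equals the number of such bivariate polynomials with f(0, 0) = s' in place of s. -/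
theorem hiding_shift_exists
    (F : Type*) [Field F] (t : ℕ)
    (T : Finset F) (hT0 : (0 : F) ∉ T) (hTt : T.card ≤ t) (a : F) :
    ∃ D : Polynomial (Polynomial F),
      (D.natDegree ≤ t ∧ ∀ i, (D.coeff i).natDegree ≤ t) ∧
      (D.eval (Polynomial.C 0)).eval 0 = a ∧
      ∀ j ∈ T, D.map (Polynomial.evalRingHom j) = 0 ∧ D.eval (Polynomial.C j) = 0 := by
  classical
  obtain ⟨p, hp⟩ : ∃ p : Polynomial F, p = ∏ j ∈ T, (Polynomial.X - Polynomial.C j) := ⟨_, rfl⟩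
  have hd : p.natDegree ≤ t := by
    rw [hp, Polynomial.natDegree_prod_of_monic _ _ (fun j _ => Polynomial.monic_X_sub_C j)]
    simpa using hTt
  have h0 : p.eval 0 ≠ 0 := by
    rw [hp, Polynomial.eval_prod, Finset.prod_ne_zero_iff]
    intro j hj h
    apply hT0
    have : j = 0 := by simpa using h
    rwa [← this]
  have hr : ∀ j ∈ T, p.eval j = 0 := by
    intro j hj
    rw [hp, Polynomial.eval_prod]
    exact Finset.prod_eq_zero hj (by simp)
  have he : ∀ j, (p.map Polynomial.C).eval (Polynomial.C j) = Polynomial.C (p.eval j) := by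
    intro j
    rw [Polynomial.eval_map, Polynomial.eval₂_at_apply]
  refine ⟨Polynomial.C (Polynomial.C (a / (p.eval 0 * p.eval 0)) * p) * p.map Polynomial.C,
    ⟨?_, ?_⟩, ?_, ?_⟩
  · exact (Polynomial.natDegree_C_mul_le _ _).trans (Polynomial.natDegree_map_le.trans hd)
  · intro i
    rw [Polynomial.coeff_C_mul, Polynomial.coeff_map]
    exact (Polynomial.natDegree_mul_C_le _ _).trans
      ((Polynomial.natDegree_C_mul_le _ _).trans hd)
  · rw [Polynomial.eval_mul, he]
    simp only [Polynomial.eval_mul, Polynomial.eval_C]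
    field_simp
  · intro j hj
    constructor
    · simp [hr j hj]
    · rw [Polynomial.eval_mul, he, hr j hj]
      simp

/-- Hiding property of the bivariate secret-sharing scheme of SVSS: the view of at most
`t` processes — row polynomials `g j = f(j, ·)` (the `X`-coefficients of `f` evaluated
at `j`) and column polynomials `h j = f(·, j)` (`f` evaluated at `j` in `Y`) — is
consistent with every possible secret `f(0,0)` in exactly the same number of ways. -/
theorem bivariate_hiding_count
    (F : Type*) [Field F] [Fintype F] (t : ℕ)
    (T : Finset F) (hT0 : (0 : F) ∉ T) (hTt : T.card ≤ t)
    (g h : F → Polynomial F)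
    (hdeg : ∀ j ∈ T, (g j).natDegree ≤ t ∧ (h j).natDegree ≤ t)
    (hcons : ∀ j ∈ T, ∀ k ∈ T, (g j).eval k = (h k).eval j)
    (s s' : F) :
    Nat.card {f : Polynomial (Polynomial F) //
        (f.natDegree ≤ t ∧ ∀ i, (f.coeff i).natDegree ≤ t) ∧
        (f.eval (Polynomial.C 0)).eval 0 = s ∧
        ∀ j ∈ T, f.map (Polynomial.evalRingHom j) = g j ∧
          f.eval (Polynomial.C j) = h j}
      = Nat.card {f : Polynomial (Polynomial F) //
        (f.natDegree ≤ t ∧ ∀ i, (f.coeff i).natDegree ≤ t) ∧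
        (f.eval (Polynomial.C 0)).eval 0 = s' ∧
        ∀ j ∈ T, f.map (Polynomial.evalRingHom j) = g j ∧
          f.eval (Polynomial.C j) = h j} := by
  obtain ⟨D, ⟨hD1, hD2⟩, hD3, hD4⟩ := hiding_shift_exists F t T hT0 hTt (s' - s)
  refine Nat.card_congr (Equiv.subtypeEquiv (Equiv.addRight D) ?_)
  intro f
  simp only [Equiv.coe_addRight]
  refine and_congr (and_congr ?_ (forall_congr' fun i => ?_))
    (and_congr ?_ (forall₂_congr fun j hj => ?_))
  · refine ⟨fun H => Polynomial.natDegree_add_le_of_degree_le H hD1, fun H => ?_⟩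
    simpa using Polynomial.natDegree_sub_le_of_le H hD1
  · rw [Polynomial.coeff_add]
    refine ⟨fun H => Polynomial.natDegree_add_le_of_degree_le H (hD2 i), fun H => ?_⟩
    simpa using Polynomial.natDegree_sub_le_of_le H (hD2 i)
  · rw [Polynomial.eval_add, Polynomial.eval_add, hD3]
    constructor <;> intro H <;> linear_combination H
  · rw [Polynomial.map_add, Polynomial.eval_add, (hD4 j hj).1, (hD4 j hj).2, add_zero, add_zero]
end
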